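/- There exists an absolute constant c > 0 with the following property. Let m, T, L, N be positive integers, let g : {1,…,L} → {1,…,T} be an assignment of independently parameterized gates to layers, let M_1,…,M_T be positive integers such that for each t the number of layers s with g(s) = t is at most M_t, let V_0, V_1, …, V_L be fixed unitaries in U(4m), and define the gate-sharing circuit map F : U(4)^T → U(4m) by F(U_1,…,U_T) = V_L (U_{g(L)} ⊗ I_m) V_{L−1} ⋯ V_1 (U_{g(1)} ⊗ I_m) V_0. Let Z be a measurable space with probability measure μ, ρ : Z → ℂ^{4m×4m} measurable with density-matrix values, C > 0, and O : Z → ℂ^{4m×4m} measurable with Hermitian values satisfying ‖O_z‖ ≤ C. Define ℓ(θ; z) = Re Tr(O_z · F(θ) · ρ(z) · F(θ)*), R(θ) = ∫ ℓ(θ; z) dμ(z), and R̂_S(θ) = (1/N) Σ_{i=1}^N ℓ(θ; z_i) for S ∈ Z^N. Then for every δ ∈ (0,1), with probability at least 1 − δ over S ~ μ^{⊗N}, simultaneously for every θ ∈ U(4)^T: R(θ) − R̂_S(θ) ≤ c · C · ( √(T(1 + log T)/N) + √((Σ_{t=1}^T log M_t)/N) + √(log(2/δ)/N) ). -/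

import Mathlib

open MeasureTheory Matrix
open scoped Kronecker ComplexOrder

/-- The ℓ²→ℓ² operator norm (spectral norm) of a complex square matrix. -/
noncomputable def opNorm {n : Type*} [Fintype n] [DecidableEq n] (A : Matrix n n ℂ) : ℝ :=
  ‖Matrix.toEuclideanCLM (𝕜 := ℂ) A‖

/-- The variational unitary circuit: `circuit V U L = V L * (U (L-1) ⊗ I) * ⋯ * (U 0 ⊗ I) * V 0`,
i.e. `L` layers of 2-qubit gates interleaved with fixed global unitaries on `ℂ^{4m}`. -/
noncomputable def circuit {m : ℕ} (V : ℕ → Matrix (Fin 4 × Fin m) (Fin 4 × Fin m) ℂ)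
    (U : ℕ → Matrix (Fin 4) (Fin 4) ℂ) : ℕ → Matrix (Fin 4 × Fin m) (Fin 4 × Fin m) ℂ
  | 0 => V 0
  | (t + 1) => V (t + 1) * (U t ⊗ₖ (1 : Matrix (Fin m) (Fin m) ℂ)) * circuit V U t

/-- The loss `ℓ(θ; z) = Re Tr(O_z · F(θ) · ρ(z) · F(θ)*)`. -/
noncomputable def qloss {m : ℕ} {Z : Type*}
    (V : ℕ → Matrix (Fin 4 × Fin m) (Fin 4 × Fin m) ℂ) (L : ℕ)
    (O ρ : Z → Matrix (Fin 4 × Fin m) (Fin 4 × Fin m) ℂ)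
    (U : ℕ → Matrix (Fin 4) (Fin 4) ℂ) (z : Z) : ℝ :=
  ((O z * circuit V U L * ρ z * (circuit V U L)ᴴ).trace).re

/-!
A circuit built from contractions is again a contraction, so replacing its gates one at a time shows
that the loss changes by at most `2 * C` times the sum over the layers of the changes in the gates.
Collecting the layers that share a gate, the loss is Lipschitz for the weighted `ℓ¹` distance
`∑ t, 2 * M t * ‖U t - U' t‖` between gate tuples. Gate `t` therefore has to be resolved to a
precision proportional to `1 / (T * M t)`; since the unit ball of the `32`-dimensional real space of
`4 × 4` complex matrices has an `ε`-net of size at most `(3 / ε) ^ 32` for `ε ≤ 1`, the class of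
losses has sup-norm nets at scale `C / 2 ^ k` whose log-cardinality is
`O((k + 1) * ∑ t, log (6 * T * M t))`. Hoeffding's inequality along the chain of nets then gives
the bound: the factor `k + 1` is absorbed by the geometric decay of the scales, so the dyadic
resolution costs only a constant.
-/

section Covering

open Metric Module
open scoped NNReal

variable {E : Type*} [NormedAddCommGroup E] [NormedSpace ℝ E] [FiniteDimensional ℝ E]

/- The balls of radius `ε / 2` around the points of `P` are disjoint and lie in the ball of radius
`r + ε / 2`, so that comparing volumes bounds their number. -/
theorem card_le_of_isSeparated_of_subset_closedBall {P : Finset E} {x : E} {r : ℝ} (hr : 0 ≤ r)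
    (hP : (P : Set E) ⊆ closedBall x r) {ε : ℝ≥0} (hε : 0 < ε)
    (hsep : IsSeparated (ε : ENNReal) (P : Set E)) :
    (P.card : ℝ) ≤ (1 + 2 * r / ε) ^ finrank ℝ E := by
  borelize E
  let vol : Measure E := Measure.addHaar
  have hε' : (0 : ℝ) < ε := hε
  have hdisj : (P : Set E).PairwiseDisjoint fun y => ball y (ε / 2 : ℝ) := by
    intro y hy z hz hyz
    refine ball_disjoint_ball ?_
    have hlt : (ε : ENNReal) < edist y z := hsep hy hz hyz
    rw [edist_nndist, ENNReal.coe_lt_coe] at hlt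
    simpa using (NNReal.coe_lt_coe.mpr hlt).le
  have hsub : ⋃ y ∈ P, ball y (ε / 2 : ℝ) ⊆ ball x (r + ε / 2) :=
    Set.iUnion₂_subset fun y hy => ball_subset_ball' <| by
      linarith [mem_closedBall.mp (hP hy)]
  have hvol : (P.card : ENNReal) * ENNReal.ofReal ((ε / 2) ^ finrank ℝ E) * vol (ball 0 1) ≤
      ENNReal.ofReal ((r + ε / 2) ^ finrank ℝ E) * vol (ball 0 1) := by
    have h := measure_mono (μ := vol) hsub
    rw [measure_biUnion_finset hdisj fun _ _ => measurableSet_ball] at h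
    simpa only [vol.addHaar_ball_of_pos _ (half_pos hε'),
      vol.addHaar_ball_of_pos x (by positivity : 0 < r + (ε : ℝ) / 2), Finset.sum_const,
      nsmul_eq_mul, mul_assoc] using h
  have hcard : (P.card : ℝ) * (ε / 2) ^ finrank ℝ E ≤ (r + ε / 2) ^ finrank ℝ E := by
    rw [ENNReal.mul_le_mul_iff_left (measure_ball_pos _ _ zero_lt_one).ne' measure_ball_lt_top.ne,
      ← ENNReal.ofReal_natCast, ← ENNReal.ofReal_mul (Nat.cast_nonneg _)] at hvol
    exact (ENNReal.ofReal_le_ofReal_iff (by positivity)).mp hvol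
  calc (P.card : ℝ) ≤ (r + ε / 2) ^ finrank ℝ E / (ε / 2) ^ finrank ℝ E := by
        rwa [le_div_iff₀ (by positivity)]
    _ = (1 + 2 * r / ε) ^ finrank ℝ E := by
        rw [← div_pow]
        congr 1
        field_simp
        ring

theorem exists_finset_isCover_card_le {s : Set E} {x : E} {r : ℝ} (hr : 0 ≤ r)
    (hs : s ⊆ closedBall x r) {ε : ℝ≥0} (hε : 0 < ε) :
    ∃ P : Finset E, (P : Set E) ⊆ s ∧ IsCover ε s (P : Set E) ∧
      (P.card : ℝ) ≤ (1 + 2 * r / ε) ^ finrank ℝ E := by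
  have hpack : packingNumber ε s ≠ ⊤ := by
    obtain ⟨Q, -, hQfin, hQ⟩ := exists_finite_isCover_of_totallyBounded (half_pos hε).ne'
      ((isCompact_closedBall x r).totallyBounded.subset hs)
    have h := (packingNumber_two_mul_le_externalCoveringNumber (ε / 2) s).trans
      hQ.externalCoveringNumber_le_encard
    rw [mul_div_cancel₀ _ two_ne_zero] at h
    exact (h.trans_lt hQfin.encard_lt_top).ne
  obtain ⟨P, hP⟩ : ∃ P : Finset E, (P : Set E) = maximalSeparatedSet ε s :=
    (Set.encard_ne_top_iff.mp (by rwa [encard_maximalSeparatedSet hpack])).exists_finset_coe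
  have hPs : (P : Set E) ⊆ s := hP ▸ maximalSeparatedSet_subset
  exact ⟨P, hPs, hP ▸ isCover_maximalSeparatedSet hpack,
    card_le_of_isSeparated_of_subset_closedBall hr (hPs.trans hs) hε
      (hP ▸ isSeparated_maximalSeparatedSet)⟩

end Covering

section CoveringPi

open Metric
open scoped NNReal

theorem exists_finset_cover_pi {ι X : Type*} [PseudoMetricSpace X] [Nonempty X] (s : Finset ι)
    {K : ι → Set X} {ε : ι → ℝ≥0} {c : ι → ℝ}
    (hK : ∀ t ∈ s, ∃ P : Finset X, (P : Set X) ⊆ K t ∧ IsCover (ε t) (K t) (P : Set X) ∧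
      (P.card : ℝ) ≤ c t) :
    ∃ Q : Finset (ι → X), (∀ θ ∈ Q, ∀ t ∈ s, θ t ∈ K t) ∧ (Q.card : ℝ) ≤ ∏ t ∈ s, c t ∧
      ∀ θ : ι → X, (∀ t ∈ s, θ t ∈ K t) → ∃ θ' ∈ Q, ∀ t ∈ s, dist (θ t) (θ' t) ≤ ε t := by
  classical
  choose! P hPK hPcover hPcard using hK
  let extend : (∀ t ∈ s, X) → ι → X := fun φ t =>
    if ht : t ∈ s then φ t ht else Classical.arbitrary X
  have hextend (φ : ∀ t ∈ s, X) {t : ι} (ht : t ∈ s) : extend φ t = φ t ht := dif_pos ht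
  refine ⟨(s.pi P).image extend, ?_, ?_, fun θ hθ => ?_⟩
  · intro θ hθ t ht
    obtain ⟨φ, hφ, rfl⟩ := Finset.mem_image.mp hθ
    rw [hextend φ ht]
    exact hPK t ht (Finset.mem_pi.mp hφ t ht)
  · calc (((s.pi P).image extend).card : ℝ) ≤ ((s.pi P).card : ℝ) := by
          exact_mod_cast Finset.card_image_le
      _ = ∏ t ∈ s, ((P t).card : ℝ) := by rw [Finset.card_pi, Nat.cast_prod]
      _ ≤ ∏ t ∈ s, c t := Finset.prod_le_prod (fun _ _ => Nat.cast_nonneg _) hPcard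
  · have hnear : ∀ t ∈ s, ∃ y ∈ P t, dist (θ t) y ≤ ε t := fun t ht => by
      simpa using (hPcover t ht).subset_iUnion_closedBall (hθ t ht)
    choose φ hφP hφ using hnear
    refine ⟨extend φ, Finset.mem_image_of_mem _ (Finset.mem_pi.mpr hφP), fun t ht => ?_⟩
    rw [hextend φ ht]
    exact hφ t ht

end CoveringPi

section HighProbability

variable {Ω : Type*} [MeasurableSpace Ω] {P : Measure Ω} [IsProbabilityMeasure P]

theorem ofReal_one_sub_le_measure_of_measure_compl_le {s : Set Ω} {δ : ℝ} (hδ : 0 ≤ δ)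
    (hs : P sᶜ ≤ ENNReal.ofReal δ) : ENNReal.ofReal (1 - δ) ≤ P s := by
  rw [ENNReal.ofReal_sub _ hδ, ENNReal.ofReal_one, tsub_le_iff_right]
  calc 1 = P Set.univ := measure_univ.symm
    _ ≤ P s + P sᶜ := measure_univ_le_add_compl s
    _ ≤ P s + ENNReal.ofReal δ := by gcongr

theorem log_two_div_nonneg {δ : ℝ} (hδ : 0 < δ) (hδ1 : δ ≤ 1) : 0 ≤ Real.log (2 / δ) :=
  Real.log_nonneg ((one_le_div₀ hδ).mpr (hδ1.trans one_le_two))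

theorem exp_mul_exp_neg_log_two_div_le {δ : ℝ} (hδ : 0 < δ) (hδ1 : δ ≤ 1) (H : ℝ) (k : ℕ) :
    Real.exp (H * (k + 1)) * Real.exp (-((k + 1) * (H + Real.log (2 / δ)))) ≤
      δ / 2 * (1 / 2) ^ k := by
  calc Real.exp (H * (k + 1)) * Real.exp (-((k + 1) * (H + Real.log (2 / δ))))
      = Real.exp (-Real.log (2 / δ)) ^ (k + 1) := by
        rw [← Real.exp_add, ← Real.exp_nat_mul]
        push_cast
        ring_nf
    _ = δ / 2 * (δ / 2) ^ k := by
        rw [Real.exp_neg, Real.exp_log (by positivity), inv_div, pow_succ']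
    _ ≤ δ / 2 * (1 / 2) ^ k := by gcongr

theorem ofReal_one_sub_le_measure_forall_of_card_le_exp {α : Type*} {D : ℕ → Finset α}
    {H δ : ℝ} (hδ : 0 < δ) (hδ1 : δ ≤ 1) (hD : ∀ k, ((D k).card : ℝ) ≤ Real.exp (H * (k + 1)))
    {good : ℕ → α → Set Ω}
    (hgood : ∀ k, ∀ d ∈ D k, P (good k d)ᶜ ≤
      ENNReal.ofReal (Real.exp (-((k + 1) * (H + Real.log (2 / δ)))))) :
    ENNReal.ofReal (1 - δ) ≤ P {ω | ∀ k, ∀ d ∈ D k, ω ∈ good k d} := by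
  have hlevel (k : ℕ) : P (⋃ d ∈ D k, (good k d)ᶜ) ≤ ENNReal.ofReal (δ / 2 * (1 / 2) ^ k) := by
    calc P (⋃ d ∈ D k, (good k d)ᶜ)
        ≤ (D k).card * ENNReal.ofReal (Real.exp (-((k + 1) * (H + Real.log (2 / δ))))) := by
          rw [← nsmul_eq_mul]
          exact (measure_biUnion_finset_le _ _).trans (Finset.sum_le_card_nsmul _ _ _ (hgood k))
      _ = ENNReal.ofReal ((D k).card * Real.exp (-((k + 1) * (H + Real.log (2 / δ))))) := by
          rw [ENNReal.ofReal_mul (Nat.cast_nonneg _), ENNReal.ofReal_natCast]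
      _ ≤ ENNReal.ofReal (δ / 2 * (1 / 2) ^ k) := ENNReal.ofReal_le_ofReal <|
        (mul_le_mul_of_nonneg_right (hD k) (Real.exp_nonneg _)).trans
          (exp_mul_exp_neg_log_two_div_le hδ hδ1 H k)
  refine ofReal_one_sub_le_measure_of_measure_compl_le hδ.le ?_
  have hsum : HasSum (fun k : ℕ => δ / 2 * (1 / 2 : ℝ) ^ k) δ := by
    simpa using hasSum_geometric_two.mul_left (δ / 2)
  calc P {ω | ∀ k, ∀ d ∈ D k, ω ∈ good k d}ᶜ
      = P (⋃ k, ⋃ d ∈ D k, (good k d)ᶜ) := by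
        congr 1
        ext ω
        simp
    _ ≤ ∑' k, ENNReal.ofReal (δ / 2 * (1 / 2) ^ k) :=
        (measure_iUnion_le _).trans (ENNReal.tsum_le_tsum hlevel)
    _ = ENNReal.ofReal δ := by
        rw [← ENNReal.ofReal_tsum_of_nonneg (fun k => by positivity) hsum.summable, hsum.tsum_eq]

end HighProbability

section GeneralizationGap

open ProbabilityTheory
open scoped NNReal

variable {Z : Type*} [MeasurableSpace Z] {μ : Measure Z} {N : ℕ}

/-- The gap `R(f) − R̂_S(f)` between the expectation of `f` under `μ` and its empirical mean over
the sample `S`. -/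
noncomputable def generalizationGap (μ : Measure Z) (f : Z → ℝ) (S : Fin N → Z) : ℝ :=
  (∫ z, f z ∂μ) - (1 / N) * ∑ i, f (S i)

theorem generalizationGap_sub {f h : Z → ℝ} (hf : Integrable f μ) (hh : Integrable h μ)
    (S : Fin N → Z) :
    generalizationGap μ (f - h) S = generalizationGap μ f S - generalizationGap μ h S := by
  simp only [generalizationGap, Pi.sub_apply, integral_sub hf hh, Finset.sum_sub_distrib]
  ring

theorem mul_generalizationGap (hN : 0 < N) (f : Z → ℝ) (S : Fin N → Z) :
    N * generalizationGap μ f S = ∑ i, ((∫ z, f z ∂μ) - f (S i)) := by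
  have hN' : (N : ℝ) ≠ 0 := by exact_mod_cast hN.ne'
  simp only [generalizationGap, Finset.sum_sub_distrib, Finset.sum_const, Finset.card_univ,
    Fintype.card_fin, nsmul_eq_mul]
  field_simp

variable [IsProbabilityMeasure μ]

theorem generalizationGap_le {f : Z → ℝ} {b : ℝ} (hN : 0 < N) (hf : ∀ z, |f z| ≤ b)
    (S : Fin N → Z) : generalizationGap μ f S ≤ 2 * b := by
  have hN' : (0 : ℝ) < N := by exact_mod_cast hN
  have hint : ∫ z, f z ∂μ ≤ b := by
    simpa using (le_abs_self _).trans
      (norm_integral_le_of_norm_le_const (μ := μ) (f := f) (C := b) (.of_forall hf))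
  refine le_of_mul_le_mul_left ?_ hN'
  calc N * generalizationGap μ f S = ∑ i, ((∫ z, f z ∂μ) - f (S i)) := mul_generalizationGap hN f S
    _ ≤ ∑ _i : Fin N, 2 * b :=
        Finset.sum_le_sum fun i _ => by linarith [(abs_le.mp (hf (S i))).1]
    _ = N * (2 * b) := by simp

theorem measureReal_pi_le_sum_le_of_hasSubgaussianMGF {ι : Type*} [Fintype ι] {X : Z → ℝ}
    {c : ℝ≥0} (hX : HasSubgaussianMGF X c μ) {ε : ℝ} (hε : 0 ≤ ε) :
    (Measure.pi fun _ : ι => μ).real {S | ε ≤ ∑ i, X (S i)} ≤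
      Real.exp (-ε ^ 2 / (2 * (Fintype.card ι * c))) := by
  have hcoord (i : ι) :
      HasSubgaussianMGF (fun S : ι → Z => X (S i)) c (Measure.pi fun _ => μ) := by
    refine .of_map (X := X) (Y := fun S : ι → Z => S i)
      (measurable_pi_apply i).aemeasurable ?_
    rwa [(measurePreserving_eval (fun _ : ι => μ) i).map_eq]
  simpa using HasSubgaussianMGF.measure_sum_ge_le_of_iIndepFun
    (iIndepFun_pi (X := fun _ => X) fun _ => hX.aemeasurable) (s := Finset.univ)
    (fun i _ => hcoord i) hε

theorem measure_pi_le_generalizationGap_le {f : Z → ℝ} (hf : Measurable f) {b : ℝ} (hb : 0 < b)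
    (hfb : ∀ z, |f z| ≤ b) (hN : 0 < N) {a : ℝ} (ha : 0 ≤ a) :
    (Measure.pi fun _ : Fin N => μ) {S | b * √(2 * a / N) ≤ generalizationGap μ f S} ≤
      ENNReal.ofReal (Real.exp (-a)) := by
  have hN' : (0 : ℝ) < N := by exact_mod_cast hN
  have hsub : HasSubgaussianMGF (fun z => (∫ z, f z ∂μ) - f z) (‖b‖₊ ^ 2) μ := by
    have h := (hasSubgaussianMGF_of_mem_Icc hf.aemeasurable
      (.of_forall fun z => abs_le.mp (hfb z) : ∀ᵐ z ∂μ, f z ∈ Set.Icc (-b) b)).neg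
    have hb2 : ‖b + b‖₊ / 2 = ‖b‖₊ := by
      rw [← two_mul, nnnorm_mul, Real.nnnorm_two, mul_div_cancel_left₀ _ two_ne_zero]
    simpa [hb2, Pi.neg_def] using h
  rw [ENNReal.le_ofReal_iff_toReal_le (measure_ne_top _ _) (Real.exp_nonneg _)]
  calc (Measure.pi fun _ : Fin N => μ).real {S | b * √(2 * a / N) ≤ generalizationGap μ f S}
      = (Measure.pi fun _ : Fin N => μ).real
          {S | N * (b * √(2 * a / N)) ≤ ∑ i, ((∫ z, f z ∂μ) - f (S i))} := by
        simp only [← mul_generalizationGap hN, mul_le_mul_iff_right₀ hN']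
    _ ≤ Real.exp (-(N * (b * √(2 * a / N))) ^ 2 /
          (2 * (Fintype.card (Fin N) * (‖b‖₊ ^ 2 : ℝ≥0)))) :=
        measureReal_pi_le_sum_le_of_hasSubgaussianMGF hsub (by positivity)
    _ = Real.exp (-a) := by
        rw [mul_pow, mul_pow, Real.sq_sqrt (by positivity), Fintype.card_fin, NNReal.coe_pow,
          coe_nnnorm, Real.norm_of_nonneg hb.le]
        congr 1
        field_simp

end GeneralizationGap

section Chaining

variable {Z : Type*} [MeasurableSpace Z] {μ : Measure Z} [IsProbabilityMeasure μ] {N : ℕ}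

open Classical in
/-- The increments met along the chain `f = π₀ f + (π₁ f - π₀ f) + (π₂ f - π₁ f) + ⋯`: level `0`
holds the points of the net `G 0`, and level `k + 1` the differences between a point of the net
`G (k + 1)` and its approximation by `π k`. -/
noncomputable def chainIncrements {Z : Type*} (G : ℕ → Finset (Z → ℝ))
    (π : ℕ → (Z → ℝ) → Z → ℝ) : ℕ → Finset (Z → ℝ)
  | 0 => G 0
  | k + 1 => (G (k + 1)).image fun h => h - π k h

theorem mem_chainIncrements_succ {Z : Type*} {G : ℕ → Finset (Z → ℝ)}
    {π : ℕ → (Z → ℝ) → Z → ℝ} {k : ℕ} {d : Z → ℝ} :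
    d ∈ chainIncrements G π (k + 1) ↔ ∃ h ∈ G (k + 1), h - π k h = d := by
  simp [chainIncrements]

theorem card_chainIncrements_le {Z : Type*} (G : ℕ → Finset (Z → ℝ)) (π : ℕ → (Z → ℝ) → Z → ℝ)
    (k : ℕ) : (chainIncrements G π k).card ≤ (G k).card := by
  cases k with
  | zero => exact le_rfl
  | succ k => classical exact Finset.card_image_le

theorem abs_le_of_mem_chainIncrements {Z : Type*} {𝓕 : Set (Z → ℝ)} {C : ℝ} (hC : 0 ≤ C)
    (hbound : ∀ f ∈ 𝓕, ∀ z, |f z| ≤ C) {G : ℕ → Finset (Z → ℝ)} {π : ℕ → (Z → ℝ) → Z → ℝ}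
    (hG : ∀ k, (G k : Set (Z → ℝ)) ⊆ 𝓕)
    (hπ : ∀ k, ∀ f ∈ 𝓕, ∀ z, |f z - π k f z| ≤ C * (1 / 2) ^ k) {k : ℕ} {d : Z → ℝ}
    (hd : d ∈ chainIncrements G π k) (z : Z) : |d z| ≤ 2 * C * (1 / 2) ^ k := by
  cases k with
  | zero =>
    rw [pow_zero, mul_one]
    linarith [hbound d (hG 0 hd) z]
  | succ k =>
    obtain ⟨h, hh, rfl⟩ := mem_chainIncrements_succ.mp hd
    exact (hπ k h (hG _ hh) z).trans (le_of_eq (by ring))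

theorem measurable_of_mem_chainIncrements {𝓕 : Set (Z → ℝ)} (hmeas : ∀ f ∈ 𝓕, Measurable f)
    {G : ℕ → Finset (Z → ℝ)} {π : ℕ → (Z → ℝ) → Z → ℝ} (hG : ∀ k, (G k : Set (Z → ℝ)) ⊆ 𝓕)
    (hπG : ∀ k, ∀ f ∈ 𝓕, π k f ∈ G k) {k : ℕ} {d : Z → ℝ} (hd : d ∈ chainIncrements G π k) :
    Measurable d := by
  cases k with
  | zero => exact hmeas d (hG 0 hd)
  | succ k =>
    obtain ⟨h, hh, rfl⟩ := mem_chainIncrements_succ.mp hd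
    exact (hmeas h (hG _ hh)).sub (hmeas _ (hG _ (hπG k h (hG _ hh))))

theorem generalizationGap_le_of_hasSum_chainIncrements {𝓕 : Set (Z → ℝ)} {C : ℝ} (hN : 0 < N)
    (hint : ∀ f ∈ 𝓕, Integrable f μ) {G : ℕ → Finset (Z → ℝ)} {π : ℕ → (Z → ℝ) → Z → ℝ}
    (hG : ∀ k, (G k : Set (Z → ℝ)) ⊆ 𝓕) (hπG : ∀ k, ∀ f ∈ 𝓕, π k f ∈ G k)
    (hπ : ∀ k, ∀ f ∈ 𝓕, ∀ z, |f z - π k f z| ≤ C * (1 / 2) ^ k) {S : Fin N → Z} {r : ℕ → ℝ}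
    {R : ℝ} (hr : HasSum r R)
    (hgap : ∀ k, ∀ d ∈ chainIncrements G π k, generalizationGap μ d S ≤ r k)
    {f : Z → ℝ} (hf : f ∈ 𝓕) : generalizationGap μ f S ≤ R := by
  have hnet (k : ℕ) : ∀ h ∈ G k, generalizationGap μ h S ≤ ∑ j ∈ Finset.range (k + 1), r j := by
    induction k with
    | zero => simpa [chainIncrements] using hgap 0
    | succ k ih =>
      intro h hh
      have hhF := hG (k + 1) hh
      have hπh := hπG k h hhF
      have hincr := hgap (k + 1) _ (mem_chainIncrements_succ.mpr ⟨h, hh, rfl⟩)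
      rw [generalizationGap_sub (hint h hhF) (hint _ (hG k hπh))] at hincr
      rw [Finset.sum_range_succ]
      linarith [ih _ hπh]
  have happrox (k : ℕ) : generalizationGap μ f S ≤
      ∑ j ∈ Finset.range (k + 1), r j + 2 * (C * (1 / 2) ^ k) := by
    have hrest := generalizationGap_le (μ := μ) (f := f - π k f) hN (hπ k f hf) S
    rw [generalizationGap_sub (hint f hf) (hint _ (hG k (hπG k f hf)))] at hrest
    linarith [hnet k _ (hπG k f hf)]
  have hlim : Filter.Tendsto (fun k => ∑ j ∈ Finset.range (k + 1), r j + 2 * (C * (1 / 2) ^ k))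
      Filter.atTop (nhds (R + 2 * (C * 0))) :=
    (hr.tendsto_sum_nat.comp (Filter.tendsto_add_atTop_nat 1)).add
      (((tendsto_pow_atTop_nhds_zero_of_lt_one (by norm_num) (by norm_num)).const_mul C).const_mul
        2)
  simpa using ge_of_tendsto' hlim happrox

theorem hasSum_succ_mul_half_pow : HasSum (fun k : ℕ => ((k : ℝ) + 1) * (1 / 2) ^ k) 4 := by
  have h := (hasSum_coe_mul_geometric_of_norm_lt_one (r := (1 / 2 : ℝ)) (by norm_num)).add
    hasSum_geometric_two
  norm_num at h
  simpa [add_mul] using h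

theorem ofReal_one_sub_le_measure_forall_generalizationGap_le {𝓕 : Set (Z → ℝ)} {C H δ : ℝ}
    (hC : 0 < C) (hH : 0 ≤ H) (hδ : 0 < δ) (hδ1 : δ ≤ 1) (hN : 0 < N)
    (hmeas : ∀ f ∈ 𝓕, Measurable f) (hbound : ∀ f ∈ 𝓕, ∀ z, |f z| ≤ C)
    (hnets : ∀ k : ℕ, ∃ G : Finset (Z → ℝ), (G : Set (Z → ℝ)) ⊆ 𝓕 ∧
      (G.card : ℝ) ≤ Real.exp (H * (k + 1)) ∧
      ∀ f ∈ 𝓕, ∃ h ∈ G, ∀ z, |f z - h z| ≤ C * (1 / 2) ^ k) :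
    ENNReal.ofReal (1 - δ) ≤ (Measure.pi fun _ : Fin N => μ) {S | ∀ f ∈ 𝓕,
      generalizationGap μ f S ≤ 8 * C * √(2 * (H + Real.log (2 / δ)) / N)} := by
  choose G hG hGcard hGnet using hnets
  choose! π hπG hπ using hGnet
  set w := √(2 * (H + Real.log (2 / δ)) / N)
  have hlog := log_two_div_nonneg hδ hδ1
  have hsum : HasSum (fun k : ℕ => 2 * C * (1 / 2) ^ k * ((k + 1) * w)) (8 * C * w) := by
    convert! hasSum_succ_mul_half_pow.mul_left (2 * C * w) using 1
    · ext k
      ring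
    · ring
  refine (ofReal_one_sub_le_measure_forall_of_card_le_exp
    (P := Measure.pi fun _ : Fin N => μ) hδ hδ1 (D := chainIncrements G π) (H := H)
    (good := fun k d => {S | generalizationGap μ d S <
      2 * C * (1 / 2) ^ k * √(2 * ((k + 1) * (H + Real.log (2 / δ))) / N)})
    (fun k => le_trans (by exact_mod_cast card_chainIncrements_le G π k) (hGcard k))
    fun k d hd => ?_).trans (measure_mono fun S hS f hf => ?_)
  · simpa only [Set.compl_ofPred, not_lt] using measure_pi_le_generalizationGap_le
      (measurable_of_mem_chainIncrements hmeas hG hπG hd) (by positivity)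
      (abs_le_of_mem_chainIncrements hC.le hbound hG hπ hd) hN (by positivity)
  · have hint : ∀ f ∈ 𝓕, Integrable f μ := fun f hf =>
      .of_bound (hmeas f hf).aestronglyMeasurable C (.of_forall (hbound f hf))
    refine generalizationGap_le_of_hasSum_chainIncrements hN hint hG hπG hπ hsum
      (fun k d hd => (hS k d hd).le.trans ?_) hf
    gcongr
    calc √(2 * ((k + 1) * (H + Real.log (2 / δ))) / N) = √(k + 1) * w := by
          rw [← Real.sqrt_mul (by positivity)]
          ring_nf
      _ ≤ (k + 1) * w := by
          gcongr
          exact Real.sqrt_le_self_iff.mpr (.inr (by simp))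

end Chaining

section WeightedLipschitz

open Metric Module
open scoped NNReal

variable {ι E : Type*} [NormedAddCommGroup E] [NormedSpace ℝ E] [FiniteDimensional ℝ E]
  {s : Finset ι} {K : Set E} {w : ι → ℝ≥0}

theorem one_add_two_mul_two_pow_le_pow_succ {x : ℝ} (hx : 1 ≤ x) (k : ℕ) :
    1 + 2 * (x * 2 ^ k) ≤ (3 * x) ^ (k + 1) := by
  have h1 : 1 ≤ x * 2 ^ k := one_le_mul_of_one_le_of_one_le hx (one_le_pow₀ one_le_two)
  calc 1 + 2 * (x * 2 ^ k) ≤ 3 * x * 2 ^ k := by linarith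
    _ ≤ 3 * x * (3 * x) ^ k := by
        gcongr
        linarith
    _ = (3 * x) ^ (k + 1) := (pow_succ' _ _).symm

theorem prod_one_add_pow_le_exp_sum_log {x : ι → ℝ} (hx : ∀ t ∈ s, 1 ≤ x t) (d k : ℕ) :
    ∏ t ∈ s, (1 + 2 * (x t * 2 ^ k)) ^ d ≤
      Real.exp (d * ∑ t ∈ s, Real.log (3 * x t) * (k + 1)) := by
  calc ∏ t ∈ s, (1 + 2 * (x t * 2 ^ k)) ^ d
      ≤ ∏ t ∈ s, Real.exp (Real.log (3 * x t) * (k + 1)) ^ d :=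
        Finset.prod_le_prod (fun t ht => by have := hx t ht; positivity) fun t ht => by
          have hpos : 0 < x t := zero_lt_one.trans_le (hx t ht)
          have hexp : Real.exp (Real.log (3 * x t) * (k + 1)) = (3 * x t) ^ (k + 1) := by
            rw [← Nat.cast_succ, mul_comm, Real.exp_nat_mul,
              Real.exp_log (by positivity)]
          rw [hexp]
          gcongr
          exact one_add_two_mul_two_pow_le_pow_succ (hx t ht) k
    _ = Real.exp (d * ∑ t ∈ s, Real.log (3 * x t) * (k + 1)) := by
        rw [Finset.prod_pow, ← Real.exp_sum, Real.exp_nat_mul]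

theorem one_le_card_mul (hw : ∀ t ∈ s, 1 ≤ w t) {t : ι} (ht : t ∈ s) : 1 ≤ s.card * w t :=
  one_le_mul_of_one_le_of_one_le (by exact_mod_cast Finset.one_le_card.mpr ⟨t, ht⟩) (hw t ht)

/- The coordinate `t` is resolved to precision `1 / (#s * w t * 2 ^ k)`, so that each of the `#s`
coordinates contributes equally to the weighted distance. -/
theorem exists_finset_weighted_cover_pi (hK : K ⊆ closedBall 0 1) (hw : ∀ t ∈ s, 1 ≤ w t) (k : ℕ) :
    ∃ Q : Finset (ι → E), (∀ θ ∈ Q, ∀ t ∈ s, θ t ∈ K) ∧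
      (Q.card : ℝ) ≤
        Real.exp (finrank ℝ E * ∑ t ∈ s, Real.log (3 * (s.card * w t)) * (k + 1)) ∧
      ∀ θ : ι → E, (∀ t ∈ s, θ t ∈ K) →
        ∃ θ' ∈ Q, ∑ t ∈ s, w t * ‖θ t - θ' t‖ ≤ (1 / 2) ^ k := by
  let ε : ι → ℝ≥0 := fun t => (s.card * w t * 2 ^ k)⁻¹
  have hε : ∀ t ∈ s, 0 < ε t := fun t ht => by
    have := zero_lt_one.trans_le (one_le_card_mul hw ht)
    positivity
  obtain ⟨Q, hQK, hQcard, hQ⟩ := exists_finset_cover_pi s (ε := ε)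
    fun t ht => exists_finset_isCover_card_le zero_le_one hK (hε t ht)
  refine ⟨Q, hQK, hQcard.trans ?_, fun θ hθ => ?_⟩
  · refine le_trans (le_of_eq ?_) (prod_one_add_pow_le_exp_sum_log (x := fun t => s.card * w t)
      (fun t ht => by exact_mod_cast one_le_card_mul hw ht) (finrank ℝ E) k)
    simp only [ε, NNReal.coe_inv, NNReal.coe_mul, NNReal.coe_pow, NNReal.coe_natCast,
      NNReal.coe_ofNat, div_inv_eq_mul, mul_one]
  · obtain ⟨θ', hθ'Q, hθ'⟩ := hQ θ hθ
    refine ⟨θ', hθ'Q, ?_⟩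
    calc ∑ t ∈ s, w t * ‖θ t - θ' t‖ ≤ ∑ t ∈ s, (w t : ℝ) * ε t :=
          Finset.sum_le_sum fun t ht => by
            rw [← dist_eq_norm]
            gcongr
            exact hθ' t ht
      _ = ∑ _t ∈ s, (s.card : ℝ)⁻¹ * (1 / 2) ^ k := Finset.sum_congr rfl fun t ht => by
            have hwt : (w t : ℝ) ≠ 0 := by
              exact_mod_cast (zero_lt_one.trans_le (hw t ht)).ne'
            simp only [ε, NNReal.coe_inv, NNReal.coe_mul, NNReal.coe_pow, NNReal.coe_natCast,
              NNReal.coe_ofNat, one_div, inv_pow]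
            field_simp
      _ ≤ (1 / 2) ^ k := by
            rw [Finset.sum_const, nsmul_eq_mul, ← mul_assoc]
            exact mul_le_of_le_one_left (by positivity) mul_inv_le_one

theorem ofReal_one_sub_le_measure_forall_generalizationGap_le_of_weighted_lipschitz {Z : Type*}
    [MeasurableSpace Z] {μ : Measure Z} [IsProbabilityMeasure μ] {N : ℕ} (hN : 0 < N)
    (hK : K ⊆ closedBall 0 1) (hw : ∀ t ∈ s, 1 ≤ w t) {ℓ : (ι → E) → Z → ℝ} {C δ : ℝ}
    (hC : 0 < C) (hδ : 0 < δ) (hδ1 : δ ≤ 1) (hmeas : ∀ θ, Measurable (ℓ θ))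
    (hbound : ∀ θ, (∀ t ∈ s, θ t ∈ K) → ∀ z, |ℓ θ z| ≤ C)
    (hlip : ∀ θ θ', (∀ t ∈ s, θ t ∈ K) → (∀ t ∈ s, θ' t ∈ K) → ∀ z,
      |ℓ θ z - ℓ θ' z| ≤ C * ∑ t ∈ s, w t * ‖θ t - θ' t‖) :
    ENNReal.ofReal (1 - δ) ≤ (Measure.pi fun _ : Fin N => μ) {S | ∀ θ, (∀ t ∈ s, θ t ∈ K) →
      generalizationGap μ (ℓ θ) S ≤ 8 * C * √(2 * (finrank ℝ E *
        ∑ t ∈ s, Real.log (3 * (s.card * w t)) + Real.log (2 / δ)) / N)} := by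
  classical
  have hH : 0 ≤ finrank ℝ E * ∑ t ∈ s, Real.log (3 * (s.card * w t)) :=
    mul_nonneg (Nat.cast_nonneg _) <| Finset.sum_nonneg fun t ht => Real.log_nonneg <| by
      have h : (1 : ℝ) ≤ s.card * w t := by exact_mod_cast one_le_card_mul hw ht
      linarith
  refine (ofReal_one_sub_le_measure_forall_generalizationGap_le (μ := μ)
    (𝓕 := ℓ '' {θ | ∀ t ∈ s, θ t ∈ K}) hC hH hδ hδ1 hN ?_ ?_ fun k => ?_).trans
    (measure_mono fun S hS θ hθ => hS (ℓ θ) (Set.mem_image_of_mem ℓ hθ))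
  · rintro _ ⟨θ, -, rfl⟩
    exact hmeas θ
  · rintro _ ⟨θ, hθ, rfl⟩
    exact hbound θ hθ
  · obtain ⟨Q, hQK, hQcard, hQ⟩ := exists_finset_weighted_cover_pi hK hw k
    refine ⟨Q.image ℓ, ?_, ?_, ?_⟩
    · rw [Finset.coe_image]
      exact Set.image_mono hQK
    · rw [mul_assoc, Finset.sum_mul]
      exact le_trans (by exact_mod_cast Finset.card_image_le) hQcard
    · rintro _ ⟨θ, hθ, rfl⟩
      obtain ⟨θ', hθ'Q, hθ'⟩ := hQ θ hθ
      exact ⟨ℓ θ', Finset.mem_image_of_mem ℓ hθ'Q, fun z =>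
        (hlip θ θ' hθ (hQK θ' hθ'Q) z).trans (by gcongr)⟩

end WeightedLipschitz

section MatrixNorms

open scoped Matrix.Norms.L2Operator MatrixOrder

theorem trace_mul_mul_conjTranspose {R m n : Type*} [CommSemiring R] [StarRing R] [Fintype m]
    [Fintype n] (A : Matrix m m R) (B : Matrix m n R) :
    (A * (B * Bᴴ)).trace = ∑ i, star (Bᵀ i) ⬝ᵥ A *ᵥ Bᵀ i := by
  rw [← Matrix.mul_assoc, trace_mul_comm]
  rfl

variable {n : Type*} [Fintype n] [DecidableEq n]

theorem norm_le_one_of_mem_unitaryGroup {U : Matrix n n ℂ} (hU : U ∈ unitaryGroup n ℂ) :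
    ‖U‖ ≤ 1 := by
  cases isEmpty_or_nonempty n
  · rw [Subsingleton.elim U 0, norm_zero]
    exact zero_le_one
  · exact (CStarRing.norm_of_mem_unitary hU).le

/-- The ⋆-homomorphism `A ↦ A ⊗ I`, which lets a gate act on part of a larger system. As a
⋆-homomorphism of C⋆-algebras it is contractive. -/
noncomputable def kroneckerOneHom (n p : Type*) [Fintype n] [DecidableEq n] [Fintype p]
    [DecidableEq p] : Matrix n n ℂ →⋆ₙₐ[ℂ] Matrix (n × p) (n × p) ℂ where
  toFun A := A ⊗ₖ (1 : Matrix p p ℂ)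
  map_smul' c A := smul_kronecker c A 1
  map_zero' := zero_kronecker 1
  map_add' A B := add_kronecker A B 1
  map_mul' A B := by rw [← mul_kronecker_mul, mul_one]
  map_star' A := by rw [star_eq_conjTranspose, star_eq_conjTranspose, conjTranspose_kronecker,
    conjTranspose_one]

theorem norm_kronecker_one_le {p : Type*} [Fintype p] [DecidableEq p] (A : Matrix n n ℂ) :
    ‖A ⊗ₖ (1 : Matrix p p ℂ)‖ ≤ ‖A‖ :=
  NonUnitalStarAlgHom.norm_apply_le (kroneckerOneHom n p) A

theorem norm_star_dotProduct_mulVec_le (A : Matrix n n ℂ) (x : n → ℂ) :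
    ‖star x ⬝ᵥ A *ᵥ x‖ ≤ ‖A‖ * (star x ⬝ᵥ x).re := by
  have hnorm : (star x ⬝ᵥ x).re = ‖WithLp.toLp 2 x‖ ^ 2 := by
    rw [dotProduct_comm, ← EuclideanSpace.inner_toLp_toLp]
    exact inner_self_eq_norm_sq (𝕜 := ℂ) _
  calc ‖star x ⬝ᵥ A *ᵥ x‖ = ‖inner ℂ (WithLp.toLp 2 x) (WithLp.toLp 2 (A *ᵥ x))‖ := by
        rw [EuclideanSpace.inner_toLp_toLp, dotProduct_comm]
    _ ≤ ‖WithLp.toLp 2 x‖ * (‖A‖ * ‖WithLp.toLp 2 x‖) :=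
        (norm_inner_le_norm _ _).trans <|
          mul_le_mul_of_nonneg_left (l2_opNorm_mulVec A _) (norm_nonneg _)
    _ = ‖A‖ * (star x ⬝ᵥ x).re := by
        rw [hnorm]
        ring

/- Write `ρ = B * Bᴴ`: the trace is then a sum of quadratic forms of `A` at the columns of `B`. -/
theorem norm_trace_mul_le_of_posSemidef (A : Matrix n n ℂ) {ρ : Matrix n n ℂ}
    (hρ : ρ.PosSemidef) : ‖(A * ρ).trace‖ ≤ ‖A‖ * ρ.trace.re := by
  obtain ⟨B, hB⟩ := CStarAlgebra.nonneg_iff_eq_mul_star_self.mp hρ.nonneg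
  have htrace : ρ.trace = ∑ i, star (Bᵀ i) ⬝ᵥ Bᵀ i := by
    simpa [hB, star_eq_conjTranspose] using trace_mul_mul_conjTranspose 1 B
  rw [htrace, hB, star_eq_conjTranspose, trace_mul_mul_conjTranspose, Complex.re_sum,
    Finset.mul_sum]
  exact norm_sum_le_of_le _ fun i _ => norm_star_dotProduct_mulVec_le A _

theorem abs_re_trace_sandwich_le {O A ρ B : Matrix n n ℂ} (hρ : ρ.PosSemidef)
    (hρ1 : ρ.trace.re ≤ 1) : |(O * A * ρ * Bᴴ).trace.re| ≤ ‖O‖ * ‖A‖ * ‖B‖ := by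
  calc |(O * A * ρ * Bᴴ).trace.re| ≤ ‖(O * A * ρ * Bᴴ).trace‖ := Complex.abs_re_le_norm _
    _ = ‖(Bᴴ * (O * A) * ρ).trace‖ := by rw [trace_mul_comm, Matrix.mul_assoc Bᴴ]
    _ ≤ ‖Bᴴ * (O * A)‖ * ρ.trace.re := norm_trace_mul_le_of_posSemidef _ hρ
    _ ≤ ‖Bᴴ * (O * A)‖ := mul_le_of_le_one_right (norm_nonneg _) hρ1
    _ ≤ ‖Bᴴ‖ * (‖O‖ * ‖A‖) :=
        (norm_mul_le _ _).trans (mul_le_mul_of_nonneg_left (norm_mul_le _ _) (norm_nonneg _))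
    _ = ‖O‖ * ‖A‖ * ‖B‖ := by rw [l2_opNorm_conjTranspose, mul_comm]

end MatrixNorms

section Circuit

open scoped Matrix.Norms.L2Operator

variable {m L : ℕ} {V : ℕ → Matrix (Fin 4 × Fin m) (Fin 4 × Fin m) ℂ}
  {U U' : ℕ → Matrix (Fin 4) (Fin 4) ℂ}

theorem norm_mul_kronecker_one_mul_le {n p : Type*} [Fintype n] [DecidableEq n] [Fintype p]
    [DecidableEq p] {A : Matrix (n × p) (n × p) ℂ} (hA : ‖A‖ ≤ 1) (B : Matrix n n ℂ)
    (D : Matrix (n × p) (n × p) ℂ) : ‖A * (B ⊗ₖ (1 : Matrix p p ℂ)) * D‖ ≤ ‖B‖ * ‖D‖ := by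
  calc ‖A * (B ⊗ₖ (1 : Matrix p p ℂ)) * D‖ ≤ ‖A‖ * ‖B ⊗ₖ (1 : Matrix p p ℂ)‖ * ‖D‖ :=
        (norm_mul_le _ _).trans (mul_le_mul_of_nonneg_right (norm_mul_le _ _) (norm_nonneg _))
    _ ≤ 1 * ‖B‖ * ‖D‖ := by
        gcongr
        exact norm_kronecker_one_le B
    _ = ‖B‖ * ‖D‖ := by rw [one_mul]

theorem norm_circuit_le_one (hV : ∀ s ≤ L, ‖V s‖ ≤ 1) (hU : ∀ s < L, ‖U s‖ ≤ 1) :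
    ‖circuit V U L‖ ≤ 1 := by
  induction L with
  | zero => exact hV 0 le_rfl
  | succ L ih =>
    exact (norm_mul_kronecker_one_mul_le (hV _ le_rfl) _ _).trans <|
      mul_le_one₀ (hU L L.lt_succ_self) (norm_nonneg _)
        (ih (fun s hs => hV s (by lia)) fun s hs => hU s (by lia))

theorem circuit_succ_sub_circuit_succ (V : ℕ → Matrix (Fin 4 × Fin m) (Fin 4 × Fin m) ℂ)
    (U U' : ℕ → Matrix (Fin 4) (Fin 4) ℂ) (L : ℕ) :
    circuit V U (L + 1) - circuit V U' (L + 1) =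
      V (L + 1) * ((U L - U' L) ⊗ₖ (1 : Matrix (Fin m) (Fin m) ℂ)) * circuit V U L +
        V (L + 1) * (U' L ⊗ₖ (1 : Matrix (Fin m) (Fin m) ℂ)) *
          (circuit V U L - circuit V U' L) := by
  have hsub : (U L - U' L) ⊗ₖ (1 : Matrix (Fin m) (Fin m) ℂ) =
      U L ⊗ₖ (1 : Matrix (Fin m) (Fin m) ℂ) - U' L ⊗ₖ (1 : Matrix (Fin m) (Fin m) ℂ) :=
    map_sub (kroneckerOneHom (Fin 4) (Fin m)) (U L) (U' L)
  rw [hsub]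
  simp only [circuit]
  noncomm_ring

theorem norm_circuit_sub_le (hV : ∀ s ≤ L, ‖V s‖ ≤ 1) (hU : ∀ s < L, ‖U s‖ ≤ 1)
    (hU' : ∀ s < L, ‖U' s‖ ≤ 1) :
    ‖circuit V U L - circuit V U' L‖ ≤ ∑ s ∈ Finset.range L, ‖U s - U' s‖ := by
  induction L with
  | zero => simp [circuit]
  | succ L ih =>
    have hVL : ∀ s ≤ L, ‖V s‖ ≤ 1 := fun s hs => hV s (by lia)
    have hUL : ∀ s < L, ‖U s‖ ≤ 1 := fun s hs => hU s (by lia)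
    rw [circuit_succ_sub_circuit_succ, Finset.sum_range_succ, add_comm]
    refine norm_add_le_of_le ?_ ?_
    · calc _ ≤ ‖U' L‖ * ‖circuit V U L - circuit V U' L‖ :=
            norm_mul_kronecker_one_mul_le (hV _ le_rfl) _ _
        _ ≤ ‖circuit V U L - circuit V U' L‖ :=
            mul_le_of_le_one_left (norm_nonneg _) (hU' L L.lt_succ_self)
        _ ≤ ∑ s ∈ Finset.range L, ‖U s - U' s‖ := ih hVL hUL fun s hs => hU' s (by lia)
    · calc _ ≤ ‖U L - U' L‖ * ‖circuit V U L‖ :=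
            norm_mul_kronecker_one_mul_le (hV _ le_rfl) _ _
        _ ≤ ‖U L - U' L‖ := mul_le_of_le_one_right (norm_nonneg _) (norm_circuit_le_one hVL hUL)

variable {Z : Type*} {O ρ : Z → Matrix (Fin 4 × Fin m) (Fin 4 × Fin m) ℂ}

theorem abs_qloss_le (hV : ∀ s ≤ L, ‖V s‖ ≤ 1) (hU : ∀ s < L, ‖U s‖ ≤ 1) {z : Z}
    (hρ : (ρ z).PosSemidef) (hρ1 : (ρ z).trace.re ≤ 1) : |qloss V L O ρ U z| ≤ ‖O z‖ := by
  have hF := norm_circuit_le_one hV hU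
  calc |qloss V L O ρ U z| ≤ ‖O z‖ * ‖circuit V U L‖ * ‖circuit V U L‖ :=
        abs_re_trace_sandwich_le hρ hρ1
    _ ≤ ‖O z‖ * 1 * 1 := by gcongr
    _ = ‖O z‖ := by rw [mul_one, mul_one]

theorem qloss_sub_qloss (z : Z) : qloss V L O ρ U z - qloss V L O ρ U' z =
    (O z * (circuit V U L - circuit V U' L) * ρ z * (circuit V U L)ᴴ).trace.re +
      (O z * circuit V U' L * ρ z * (circuit V U L - circuit V U' L)ᴴ).trace.re := by
  simp only [qloss, ← Complex.sub_re, ← Complex.add_re, ← trace_sub, ← trace_add,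
    conjTranspose_sub]
  congr 2
  noncomm_ring

theorem abs_qloss_sub_le (hV : ∀ s ≤ L, ‖V s‖ ≤ 1) (hU : ∀ s < L, ‖U s‖ ≤ 1)
    (hU' : ∀ s < L, ‖U' s‖ ≤ 1) {z : Z} (hρ : (ρ z).PosSemidef) (hρ1 : (ρ z).trace.re ≤ 1) :
    |qloss V L O ρ U z - qloss V L O ρ U' z| ≤
      ‖O z‖ * (2 * ∑ s ∈ Finset.range L, ‖U s - U' s‖) := by
  have hF := norm_circuit_le_one hV hU
  have hF' := norm_circuit_le_one hV hU'
  rw [qloss_sub_qloss]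
  calc _ ≤ ‖O z‖ * ‖circuit V U L - circuit V U' L‖ * ‖circuit V U L‖ +
          ‖O z‖ * ‖circuit V U' L‖ * ‖circuit V U L - circuit V U' L‖ :=
        (abs_add_le _ _).trans <|
          add_le_add (abs_re_trace_sandwich_le hρ hρ1) (abs_re_trace_sandwich_le hρ hρ1)
    _ ≤ ‖O z‖ * ‖circuit V U L - circuit V U' L‖ * 1 +
          ‖O z‖ * 1 * ‖circuit V U L - circuit V U' L‖ := by gcongr
    _ = ‖O z‖ * (2 * ‖circuit V U L - circuit V U' L‖) := by ring
    _ ≤ ‖O z‖ * (2 * ∑ s ∈ Finset.range L, ‖U s - U' s‖) := by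
        gcongr
        exact norm_circuit_sub_le hV hU hU'

theorem measurable_qloss [MeasurableSpace Z] (hO : ∀ p q, Measurable fun z => O z p q)
    (hρ : ∀ p q, Measurable fun z => ρ z p q) : Measurable (qloss V L O ρ U) := by
  unfold qloss
  simp only [trace, diag, mul_apply]
  fun_prop

theorem sum_comp_le_sum_mul {σ τ : Type*} [DecidableEq τ] {s : Finset σ} {t : Finset τ}
    {g : σ → τ} (hg : ∀ i ∈ s, g i ∈ t) {M : τ → ℕ}
    (hM : ∀ j ∈ t, (s.filter fun i => g i = j).card ≤ M j) {x : τ → ℝ} (hx : ∀ j ∈ t, 0 ≤ x j) :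
    ∑ i ∈ s, x (g i) ≤ ∑ j ∈ t, M j * x j := by
  rw [← Finset.sum_fiberwise_of_maps_to' hg]
  refine Finset.sum_le_sum fun j hj => ?_
  rw [Finset.sum_const, nsmul_eq_mul]
  exact mul_le_mul_of_nonneg_right (by exact_mod_cast hM j hj) (hx j hj)

theorem abs_qloss_comp_sub_le {T : ℕ} {g M : ℕ → ℕ} (hg : ∀ s < L, g s < T)
    (hM : ∀ t < T, ((Finset.range L).filter fun s => g s = t).card ≤ M t)
    (hV : ∀ s ≤ L, ‖V s‖ ≤ 1) (hU : ∀ t < T, ‖U t‖ ≤ 1) (hU' : ∀ t < T, ‖U' t‖ ≤ 1) {z : Z}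
    (hρ : (ρ z).PosSemidef) (hρ1 : (ρ z).trace.re ≤ 1) :
    |qloss V L O ρ (fun s => U (g s)) z - qloss V L O ρ (fun s => U' (g s)) z| ≤
      ‖O z‖ * ∑ t ∈ Finset.range T, 2 * M t * ‖U t - U' t‖ := by
  refine (abs_qloss_sub_le hV (fun s hs => hU _ (hg s hs)) (fun s hs => hU' _ (hg s hs))
    hρ hρ1).trans ?_
  simp only [mul_assoc (2 : ℝ), ← Finset.mul_sum]
  gcongr
  exact sum_comp_le_sum_mul (by simpa using hg) (by simpa using hM) (x := fun t => ‖U t - U' t‖)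
    fun t _ => norm_nonneg _

end Circuit

theorem sum_log_gate_weight_le (T : ℕ) {M : ℕ → ℕ} (hM : ∀ t < T, 0 < M t) :
    ∑ t ∈ Finset.range T, Real.log (3 * (T * (2 * M t))) ≤
      2 * (T * (1 + Real.log T)) + ∑ t ∈ Finset.range T, Real.log (M t) := by
  have hlog6 : Real.log 6 ≤ 2 := by
    rw [Real.log_le_iff_le_exp (by norm_num), ← one_add_one_eq_two, Real.exp_add]
    nlinarith [Real.exp_one_gt_d9]
  have hsplit : ∀ t ∈ Finset.range T, Real.log (3 * (T * (2 * M t))) =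
      Real.log 6 + Real.log T + Real.log (M t) := fun t ht => by
    have ht' := Finset.mem_range.mp ht
    have hT : (T : ℝ) ≠ 0 := by exact_mod_cast (Nat.zero_lt_of_lt ht').ne'
    have hMt : (M t : ℝ) ≠ 0 := by exact_mod_cast (hM t ht').ne'
    rw [← Real.log_mul (by norm_num) hT, ← Real.log_mul (by positivity) hMt]
    ring_nf
  rw [Finset.sum_congr rfl hsplit, Finset.sum_add_distrib, Finset.sum_const, Finset.card_range,
    nsmul_eq_mul]
  nlinarith [mul_le_mul_of_nonneg_left hlog6 T.cast_nonneg,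
    mul_nonneg (T.cast_nonneg (α := ℝ)) (Real.log_natCast_nonneg T)]

theorem sqrt_add_add_le {a b c : ℝ} (ha : 0 ≤ a) (hb : 0 ≤ b) (hc : 0 ≤ c) :
    √(a + b + c) ≤ √a + √b + √c := by
  refine Real.sqrt_le_iff.mpr ⟨by positivity, ?_⟩
  have := mul_nonneg (Real.sqrt_nonneg a) (Real.sqrt_nonneg b)
  have := mul_nonneg (Real.sqrt_nonneg a) (Real.sqrt_nonneg c)
  have := mul_nonneg (Real.sqrt_nonneg b) (Real.sqrt_nonneg c)
  linarith [Real.sq_sqrt ha, Real.sq_sqrt hb, Real.sq_sqrt hc]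

theorem sqrt_gate_sharing_rate_le {a b c x N : ℝ} (ha : 0 ≤ a) (hb : 0 ≤ b) (hc : 0 ≤ c)
    (hN : 0 < N) (hx : x ≤ 2 * a + b) :
    √(2 * (32 * x + c) / N) ≤ 12 * (√(a / N) + √(b / N) + √(c / N)) := by
  calc √(2 * (32 * x + c) / N) ≤ √(12 ^ 2 * (a / N + b / N + c / N)) := by
        refine Real.sqrt_le_sqrt ?_
        rw [← add_div, ← add_div, ← mul_div_assoc]
        refine div_le_div_of_nonneg_right ?_ hN.le
        linarith
    _ = 12 * √(a / N + b / N + c / N) := by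
        rw [Real.sqrt_mul (by norm_num), Real.sqrt_sq (by norm_num)]
    _ ≤ 12 * (√(a / N) + √(b / N) + √(c / N)) := by
        gcongr
        exact sqrt_add_add_le (by positivity) (by positivity) (by positivity)

theorem finrank_real_matrix_complex (m n : Type*) [Fintype m] [Fintype n] :
    Module.finrank ℝ (Matrix m n ℂ) = 2 * (Fintype.card m * Fintype.card n) := by
  rw [← Module.finrank_mul_finrank ℝ ℂ, Module.finrank_matrix, Complex.finrank_real_complex,
    Module.finrank_self, mul_one]

section Main

open scoped Matrix.Norms.L2Operator

theorem gate_sharing_qmlm_generalization_general {m T L N : ℕ} (hN : 0 < N) {g : ℕ → ℕ}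
    (hg : ∀ s < L, g s < T) {M : ℕ → ℕ} (hM0 : ∀ t < T, 0 < M t)
    (hM : ∀ t < T, ((Finset.range L).filter fun s => g s = t).card ≤ M t)
    {V : ℕ → Matrix (Fin 4 × Fin m) (Fin 4 × Fin m) ℂ} (hV : ∀ s ≤ L, opNorm (V s) ≤ 1)
    {Z : Type*} [MeasurableSpace Z] {μ : Measure Z} [IsProbabilityMeasure μ]
    {ρ O : Z → Matrix (Fin 4 × Fin m) (Fin 4 × Fin m) ℂ}
    (hρm : ∀ p q, Measurable fun z => ρ z p q)
    (hρ : ∀ z, (ρ z).PosSemidef ∧ (ρ z).trace.re ≤ 1)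
    (hOm : ∀ p q, Measurable fun z => O z p q) {C : ℝ} (hC : 0 < C) (hO : ∀ z, opNorm (O z) ≤ C)
    {δ : ℝ} (hδ : 0 < δ) (hδ1 : δ ≤ 1) :
    ENNReal.ofReal (1 - δ) ≤ (Measure.pi fun _ : Fin N => μ)
      {S | ∀ U : ℕ → Matrix (Fin 4) (Fin 4) ℂ, (∀ t < T, opNorm (U t) ≤ 1) →
        generalizationGap μ (qloss V L O ρ fun s => U (g s)) S ≤
          96 * C * (√(T * (1 + Real.log T) / N) +
            √((∑ t ∈ Finset.range T, Real.log (M t)) / N) + √(Real.log (2 / δ) / N))} := by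
  have hunit {U : ℕ → Matrix (Fin 4) (Fin 4) ℂ}
      (hU : ∀ t ∈ Finset.range T, U t ∈ Metric.closedBall 0 1) {t : ℕ} (ht : t < T) :
      ‖U t‖ ≤ 1 := by
    simpa using hU t (Finset.mem_range.mpr ht)
  refine (ofReal_one_sub_le_measure_forall_generalizationGap_le_of_weighted_lipschitz (μ := μ)
    (s := Finset.range T) (K := Metric.closedBall 0 1) (w := fun t => 2 * M t)
    (ℓ := fun U => qloss V L O ρ fun s => U (g s)) hN le_rfl (fun t ht => ?_) hC hδ hδ1
    (fun U => measurable_qloss hOm hρm) (fun U hU z => ?_) fun U U' hU hU' z => ?_).trans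
    (measure_mono fun S hS U hU => ?_)
  · have := hM0 t (Finset.mem_range.mp ht)
    exact_mod_cast (by lia : 1 ≤ 2 * M t)
  · exact (abs_qloss_le hV (fun s hs => hunit hU (hg s hs)) (hρ z).1 (hρ z).2).trans (hO z)
  · refine (abs_qloss_comp_sub_le hg hM hV (fun t => hunit hU) (fun t => hunit hU')
      (hρ z).1 (hρ z).2).trans ?_
    push_cast
    gcongr
    exact hO z
  · refine (hS U fun t ht => mem_closedBall_zero_iff.mpr (hU t (Finset.mem_range.mp ht))).trans ?_
    rw [finrank_real_matrix_complex, Fintype.card_fin, Finset.card_range,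
      (by norm_num : ((2 * (4 * 4) : ℕ) : ℝ) = 32)]
    have hrate := sqrt_gate_sharing_rate_le (c := Real.log (2 / δ)) (by positivity)
      (Finset.sum_nonneg fun t _ => Real.log_natCast_nonneg (M t)) (log_two_div_nonneg hδ hδ1)
      (Nat.cast_pos.mpr hN) (sum_log_gate_weight_le T hM0)
    push_cast
    linarith [mul_le_mul_of_nonneg_left hrate (by positivity : 0 ≤ 8 * C)]

end Main

/-- Generalization bound for a gate-sharing QMLM: `T` independently parameterized 2-qubit gates,
gate `t` reused at most `M t` times across `L` layers (layer `s` applies gate `g s`). -/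
theorem gate_sharing_qmlm_generalization :
    ∃ c : ℝ, 0 < c ∧
      ∀ (m T L N : ℕ), 0 < m → 0 < T → 0 < L → 0 < N →
      ∀ g : ℕ → ℕ, (∀ s < L, g s < T) →
      ∀ M : ℕ → ℕ, (∀ t < T, 0 < M t) →
        (∀ t < T, ((Finset.range L).filter fun s => g s = t).card ≤ M t) →
      ∀ V : ℕ → Matrix (Fin 4 × Fin m) (Fin 4 × Fin m) ℂ,
        (∀ s ≤ L, V s ∈ Matrix.unitaryGroup (Fin 4 × Fin m) ℂ) →
      ∀ (Z : Type) (_ : MeasurableSpace Z) (μ : Measure Z), IsProbabilityMeasure μ →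
      ∀ ρ : Z → Matrix (Fin 4 × Fin m) (Fin 4 × Fin m) ℂ,
        (∀ p q, Measurable fun z => ρ z p q) →
        (∀ z, (ρ z).PosSemidef ∧ (ρ z).trace = 1) →
      ∀ C : ℝ, 0 < C →
      ∀ O : Z → Matrix (Fin 4 × Fin m) (Fin 4 × Fin m) ℂ,
        (∀ p q, Measurable fun z => O z p q) →
        (∀ z, (O z).IsHermitian ∧ opNorm (O z) ≤ C) →
      ∀ δ : ℝ, 0 < δ → δ < 1 →
        ENNReal.ofReal (1 - δ) ≤
          (Measure.pi fun _ : Fin N => μ) {S | ∀ U : ℕ → Matrix (Fin 4) (Fin 4) ℂ,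
            (∀ t < T, U t ∈ Matrix.unitaryGroup (Fin 4) ℂ) →
            (∫ z, qloss V L O ρ (fun s => U (g s)) z ∂μ)
                - (1 / N) * ∑ i, qloss V L O ρ (fun s => U (g s)) (S i)
              ≤ c * C * (Real.sqrt (T * (1 + Real.log T) / N)
                  + Real.sqrt ((∑ t ∈ Finset.range T, Real.log (M t)) / N)
                  + Real.sqrt (Real.log (2 / δ) / N))} := by
  refine ⟨96, by norm_num, ?_⟩
  intro m T L N _ _ _ hN g hg M hM0 hM V hV Z _ μ _ ρ hρm hρ C hC O hOm hO δ hδ hδ1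
  exact (gate_sharing_qmlm_generalization_general hN hg hM0 hM
    (fun s hs => norm_le_one_of_mem_unitaryGroup (hV s hs)) hρm
    (fun z => ⟨(hρ z).1, by simp [(hρ z).2]⟩) hOm hC (fun z => (hO z).2) hδ hδ1.le).trans
    (measure_mono fun S hS U hU => hS U fun t ht => norm_le_one_of_mem_unitaryGroup (hU t ht))
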